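/- Every term of the semigroup L is provably equal, using only associativity of concatenation and the axiom ↰n;X = ↰n, to a first canonical L-form; this first canonical L-form is obtained by deleting all instructions strictly to the right of the leftmost repeat instruction if a repeat instruction occurs, and is the term itself otherwise. In particular every L-term is provably equal to a term containing at most one repeat instruction. -/

import Mathlib

/-- Primitive instructions over a set `A` of basic instructions:
basic instructions `a`, positive tests `+a`, negative tests `-a`,
jump instructions `#k` and the termination instruction `!`. -/
inductive PrimInstr (A : Type) : Type where
  | basic (a : A)
  | pos (a : A)
  | neg (a : A)
  | jump (k : Nat)
  | halt
deriving DecidableEq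

/-- Instructions of the semigroup `L`: primitive instructions and
repeat instructions (repeaters) `↰n`.  (Genuine repeaters have `n ≥ 1`;
this is imposed as a hypothesis wherever relevant.) -/
inductive Instr (A : Type) : Type where
  | prim (u : PrimInstr A)
  | rep (n : Nat)
deriving DecidableEq

/-- Is this instruction a repeater? -/
def Instr.isRep {A : Type} : Instr A → Bool
  | .rep _ => true
  | .prim _ => false

/-- `↰n` is a genuine repeat instruction only for `n ≥ 1`. -/
def Instr.valid {A : Type} : Instr A → Prop
  | .prim _ => True
  | .rep n => 1 ≤ n

/-- Terms of the semigroup `L`: finite nonempty sequences of instructions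
under (associative) concatenation. -/
inductive LTerm (A : Type) : Type where
  | instr (i : Instr A)
  | seq (s t : LTerm A)
deriving DecidableEq

/-- The (nonempty) sequence of instructions an `L`-term consists of. -/
def LTerm.flat {A : Type} : LTerm A → List (Instr A)
  | .instr i => [i]
  | .seq s t => s.flat ++ t.flat

/-- Equational-logic derivability in the semigroup `L` from associativity of
concatenation and the axiom `↰n ; X = ↰n` alone. -/
inductive DerivL0 {A : Type} : LTerm A → LTerm A → Prop
  | refl (t : LTerm A) : DerivL0 t t
  | symm {s t : LTerm A} : DerivL0 s t → DerivL0 t s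
  | trans {s t u : LTerm A} : DerivL0 s t → DerivL0 t u → DerivL0 s u
  | seq_congr {s s' t t' : LTerm A} : DerivL0 s s' → DerivL0 t t' → DerivL0 (s.seq t) (s'.seq t')
  | assoc (s t u : LTerm A) : DerivL0 ((s.seq t).seq u) (s.seq (t.seq u))
  | rep_absorb (n : ℕ) (hn : 1 ≤ n) (t : LTerm A) :
      DerivL0 ((LTerm.instr (.rep n)).seq t) (.instr (.rep n))

/-- The first canonical `L`-form of an instruction sequence starting with `i`
and continuing with `l`: everything strictly to the right of the leftmost
repeat instruction (if any) is deleted. -/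
def truncTerm {A : Type} : Instr A → List (Instr A) → LTerm A
  | i, [] => .instr i
  | i, j :: l => if i.isRep then .instr i else (LTerm.instr i).seq (truncTerm j l)

/-
Associativity alone brackets every term to the right, `u₁; (u₂; (… ; uₙ))`. In this shape everything
after the leftmost repeater `↰n` is a single term `X` in a subterm `↰n; X`, so one application of
`↰n; X = ↰n` inside the prefix of primitive instructions deletes it all at once.
-/

section

variable {A : Type}

namespace LTerm

theorem flat_ne_nil (t : LTerm A) : t.flat ≠ [] := by
  induction t with
  | instr i => exact List.cons_ne_nil i []
  | seq s t ihs _ => exact List.append_ne_nil_of_left_ne_nil ihs t.flat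

/-- The right-bracketed term `i; (i₁; (i₂; …))`, the normal form of `L`-terms under associativity.
As in `truncTerm`, the head is a separate argument because `L` has no empty term. -/
def rightAssoc : Instr A → List (Instr A) → LTerm A
  | i, [] => .instr i
  | i, j :: l => (instr i).seq (rightAssoc j l)

/-- First canonical `L`-forms `u₁;…;uₙ` and `u₁;…;uₖ;↰n`, as a property of the underlying
instruction sequence, hence regardless of bracketing. -/
def IsFirstCanonical (t : LTerm A) : Prop :=
  (∃ us : List (PrimInstr A), t.flat = us.map Instr.prim) ∨
    ∃ (us : List (PrimInstr A)) (n : ℕ), 1 ≤ n ∧ t.flat = us.map Instr.prim ++ [Instr.rep n]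

end LTerm

open LTerm

namespace DerivL0

theorem seq_congr_right (s : LTerm A) {t t' : LTerm A} (h : DerivL0 t t') :
    DerivL0 (s.seq t) (s.seq t') :=
  (refl s).seq_congr h

theorem rightAssoc_seq_rightAssoc (i : Instr A) (l : List (Instr A)) (j : Instr A)
    (m : List (Instr A)) :
    DerivL0 ((rightAssoc i l).seq (rightAssoc j m)) (rightAssoc i (l ++ j :: m)) := by
  induction l generalizing i with
  | nil => exact refl _
  | cons k l ih => exact (assoc _ _ _).trans (seq_congr_right _ (ih k))

theorem rightAssoc_of_flat_eq_cons {t : LTerm A} {i : Instr A} {l : List (Instr A)}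
    (h : t.flat = i :: l) : DerivL0 t (rightAssoc i l) := by
  induction t generalizing i l with
  | instr j =>
    obtain ⟨rfl, rfl⟩ := List.cons_eq_cons.mp h
    exact refl _
  | seq s t ihs iht =>
    obtain ⟨a, p, hs⟩ := List.exists_cons_of_ne_nil s.flat_ne_nil
    obtain ⟨b, q, ht⟩ := List.exists_cons_of_ne_nil t.flat_ne_nil
    have hflat : a :: (p ++ b :: q) = i :: l := by rw [← h, flat, hs, ht, List.cons_append]
    obtain ⟨rfl, rfl⟩ := List.cons_eq_cons.mp hflat
    exact ((ihs hs).seq_congr (iht ht)).trans (rightAssoc_seq_rightAssoc a p b q)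

theorem rightAssoc_truncTerm {i : Instr A} {l : List (Instr A)} (hv : ∀ x ∈ i :: l, x.valid) :
    DerivL0 (rightAssoc i l) (truncTerm i l) := by
  induction l generalizing i with
  | nil => exact refl _
  | cons j l ih =>
    obtain ⟨hi, hl⟩ := List.forall_mem_cons.mp hv
    cases i with
    | prim u => exact seq_congr_right _ (ih hl)
    | rep n => exact rep_absorb n hi _

end DerivL0

namespace LTerm

theorem isFirstCanonical_instr {i : Instr A} (hi : i.valid) : (instr i).IsFirstCanonical := by
  cases i with
  | prim u => exact .inl ⟨[u], rfl⟩
  | rep n => exact .inr ⟨[], n, hi, rfl⟩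

theorem IsFirstCanonical.prim_seq {t : LTerm A} (ht : t.IsFirstCanonical) (u : PrimInstr A) :
    ((instr (.prim u)).seq t).IsFirstCanonical := by
  rcases ht with ⟨us, h⟩ | ⟨us, n, hn, h⟩
  · exact .inl ⟨u :: us, congrArg (Instr.prim u :: ·) h⟩
  · exact .inr ⟨u :: us, n, hn, congrArg (Instr.prim u :: ·) h⟩

theorem isFirstCanonical_truncTerm {i : Instr A} {l : List (Instr A)}
    (hv : ∀ x ∈ i :: l, x.valid) : (truncTerm i l).IsFirstCanonical := by
  induction l generalizing i with
  | nil => exact isFirstCanonical_instr (List.forall_mem_singleton.mp hv)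
  | cons j l ih =>
    obtain ⟨hi, hl⟩ := List.forall_mem_cons.mp hv
    cases i with
    | prim u => exact (ih hl).prim_seq u
    | rep n => exact isFirstCanonical_instr hi

theorem countP_isRep_map_prim (us : List (PrimInstr A)) :
    (us.map Instr.prim).countP Instr.isRep = 0 := by
  simp [List.countP_eq_zero, Instr.isRep]

theorem IsFirstCanonical.countP_isRep_le_one {t : LTerm A} (ht : t.IsFirstCanonical) :
    t.flat.countP Instr.isRep ≤ 1 := by
  rcases ht with ⟨us, h⟩ | ⟨us, n, -, h⟩
  · rw [h, countP_isRep_map_prim]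
    exact zero_le_one
  · rw [h, List.countP_append, countP_isRep_map_prim, zero_add]
    exact List.countP_le_length

end LTerm

end

/-- Every `L`-term is provably equal, using only associativity and the axiom
`↰n ; X = ↰n`, to its first canonical `L`-form, obtained by deleting all
instructions strictly to the right of the leftmost repeat instruction (and
being the term itself if no repeat instruction occurs); in particular the
canonical form contains at most one repeat instruction. -/
theorem first_canonical_L_form (A : Type) (t : LTerm A)
    (hv : ∀ i ∈ t.flat, i.valid) (i : Instr A) (l : List (Instr A))
    (hflat : t.flat = i :: l) :
    DerivL0 t (truncTerm i l) ∧
    ((∃ us : List (PrimInstr A), (truncTerm i l).flat = us.map Instr.prim) ∨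
     (∃ (us : List (PrimInstr A)) (n : ℕ), 1 ≤ n ∧
        (truncTerm i l).flat = us.map Instr.prim ++ [Instr.rep n])) ∧
    (truncTerm i l).flat.countP Instr.isRep ≤ 1 := by
  have hv' : ∀ x ∈ i :: l, x.valid := hflat ▸ hv
  have hderiv : DerivL0 t (truncTerm i l) :=
    (DerivL0.rightAssoc_of_flat_eq_cons hflat).trans (DerivL0.rightAssoc_truncTerm hv')
  have hcanon : (truncTerm i l).IsFirstCanonical := LTerm.isFirstCanonical_truncTerm hv'
  exact ⟨hderiv, hcanon, hcanon.countP_isRep_le_one⟩
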